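/- arXiv:1303.3543 — 2 statements merged into one kernel-verified Lean document; each statement's English description precedes it below -/
import Mathlib

section
/- Let {μ_y : y ∈ Y} be a σ-finite disintegration of μ with respect to (ν, φ) that is uniformly σ-finite. Then there is a sequence of Borel maps y ↦ K_n(y) from Y into the hyperspace K(X) of compact subsets of X such that μ_y(K_n(y)) < ∞ for all y and n, and μ_y(X \ ⋃_n K_n(y)) = 0 for all y. -/
open MeasureTheory TopologicalSpace

section Aux

open Set Metric Filter Topology PiNat

theorem aux_section_complete (α : Type*) [MetricSpace α]
    [CompleteSpace α] [SecondCountableTopology α] [Nonempty α]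
    [MeasurableSpace α] [OpensMeasurableSpace α] :
    ∃ (f : (ℕ → ℕ) → α) (σ : α → ℕ → ℕ), Continuous f ∧ Measurable σ ∧ ∀ x, f (σ x) = x := by
  let : MetricSpace (ℕ → ℕ) := PiNat.metricSpaceNatNat
  have I0 : (0 : ℝ) < 1 / 2 := by simp
  have I1 : (1 / 2 : ℝ) < 1 := by norm_num
  rcases exists_dense_seq α with ⟨u, hu⟩
  let s : Set (ℕ → ℕ) := { x | (⋂ n : ℕ, closedBall (u (x n)) ((1 / 2) ^ n)).Nonempty }
  let g : s → α := fun x => x.2.some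
  have A : ∀ (x : s) (n : ℕ), dist (g x) (u ((x : ℕ → ℕ) n)) ≤ (1 / 2) ^ n := fun x n =>
    (mem_iInter.1 x.2.some_mem n :)
  have g_cont : Continuous g := by
    refine continuous_iff_continuousAt.2 fun y => ?_
    refine continuousAt_of_locally_lipschitz zero_lt_one 4 fun x hxy => ?_
    rcases eq_or_ne x y with (rfl | hne)
    · simp
    have hne' : x.1 ≠ y.1 := Subtype.coe_injective.ne hne
    have dist' : dist x y = dist x.1 y.1 := rfl
    let n := firstDiff x.1 y.1 - 1
    have diff_pos : 0 < firstDiff x.1 y.1 := by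
      by_contra! h
      apply apply_firstDiff_ne hne'
      rw [Nat.le_zero.1 h]
      apply apply_eq_of_dist_lt _ le_rfl
      rw [pow_zero]
      exact hxy
    have hn : firstDiff x.1 y.1 = n + 1 := (Nat.succ_pred_eq_of_pos diff_pos).symm
    rw [dist', dist_eq_of_ne hne', hn]
    have B : x.1 n = y.1 n := mem_cylinder_firstDiff x.1 y.1 n (Nat.pred_lt diff_pos.ne')
    calc
      dist (g x) (g y) ≤ dist (g x) (u (x.1 n)) + dist (g y) (u (x.1 n)) :=
        dist_triangle_right _ _ _
      _ = dist (g x) (u (x.1 n)) + dist (g y) (u (y.1 n)) := by rw [← B]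
      _ ≤ (1 / 2) ^ n + (1 / 2) ^ n := add_le_add (A x n) (A y n)
      _ = 4 * (1 / 2) ^ (n + 1) := by ring
  classical
  have hex : ∀ (n : ℕ) (y : α), ∃ j, y ∈ closedBall (u j) ((1 / 2) ^ n) := fun n y ↦ by
    rcases hu.exists_dist_lt y (by simp : (0 : ℝ) < (1 / 2) ^ n) with ⟨j, hj⟩
    exact ⟨j, hj.le⟩
  let σ : α → ℕ → ℕ := fun y n => Nat.find (hex n y)
  have hσ : Measurable σ := by
    refine measurable_pi_iff.2 fun n => ?_
    exact measurable_find (hex n) fun k => isClosed_closedBall.measurableSet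
  have hσx : ∀ y n, y ∈ closedBall (u (σ y n)) ((1 / 2) ^ n) := fun y n => Nat.find_spec (hex n y)
  have I : ∀ y, σ y ∈ s := fun y => ⟨y, mem_iInter.2 (hσx y)⟩
  have g_sec : ∀ y, g ⟨σ y, I y⟩ = y := fun y ↦ by
    refine dist_le_zero.1 ?_
    have J : ∀ n : ℕ, dist (g ⟨σ y, I y⟩) y ≤ (1 / 2) ^ n + (1 / 2) ^ n := fun n =>
      calc
        dist (g ⟨σ y, I y⟩) y ≤ dist (g ⟨σ y, I y⟩) (u (σ y n)) + dist y (u (σ y n)) :=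
          dist_triangle_right _ _ _
        _ ≤ (1 / 2) ^ n + (1 / 2) ^ n := add_le_add (A ⟨σ y, I y⟩ n) (hσx y n)
    have L : Tendsto (fun n : ℕ => (1 / 2 : ℝ) ^ n + (1 / 2) ^ n) atTop (𝓝 (0 + 0)) :=
      (tendsto_pow_atTop_nhds_zero_of_lt_one I0.le I1).add
        (tendsto_pow_atTop_nhds_zero_of_lt_one I0.le I1)
    rw [add_zero] at L
    exact ge_of_tendsto' L J
  have s_closed : IsClosed s := by
    refine isClosed_iff_clusterPt.mpr fun x hx ↦ ?_
    have L : Tendsto (fun n : ℕ => diam (closedBall (u (x n)) ((1 / 2) ^ n))) atTop (𝓝 0) := by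
      have : Tendsto (fun n : ℕ => (2 : ℝ) * (1 / 2) ^ n) atTop (𝓝 (2 * 0)) :=
        (tendsto_pow_atTop_nhds_zero_of_lt_one I0.le I1).const_mul _
      rw [mul_zero] at this
      exact
        squeeze_zero (fun n => diam_nonneg) (fun n => diam_closedBall (pow_nonneg I0.le _)) this
    refine nonempty_iInter_of_nonempty_biInter (fun n => isClosed_closedBall)
      (fun n => isBounded_closedBall) (fun N ↦ ?_) L
    obtain ⟨y, hxy, ys⟩ : ∃ y, y ∈ ball x ((1 / 2) ^ N) ∩ s :=
      clusterPt_principal_iff.1 hx _ (ball_mem_nhds x (pow_pos I0 N))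
    have E :
      ⋂ (n : ℕ) (H : n ≤ N), closedBall (u (x n)) ((1 / 2) ^ n) =
        ⋂ (n : ℕ) (H : n ≤ N), closedBall (u (y n)) ((1 / 2) ^ n) := by
      refine iInter_congr fun n ↦ iInter_congr fun hn ↦ ?_
      have : x n = y n := apply_eq_of_dist_lt (mem_ball'.1 hxy) hn
      rw [this]
    rw [E]
    apply Nonempty.mono _ ys
    apply iInter_subset_iInter₂
  obtain ⟨r, hrs, hr⟩ := PiNat.exists_retraction_subtype_of_isClosed s_closed
    ⟨_, I (Classical.arbitrary α)⟩
  refine ⟨fun x => g (r x), σ, g_cont.comp hr.2, hσ, fun y => ?_⟩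
  have : r (σ y) = ⟨σ y, I y⟩ := hrs ⟨σ y, I y⟩
  simp only [this, g_sec]

theorem aux_section_closed {X : Type*} [TopologicalSpace X] [PolishSpace X]
    [MeasurableSpace X] [BorelSpace X] {B : Set X} (hB : IsClosed B) (hne : B.Nonempty) :
    ∃ (f : (ℕ → ℕ) → X) (σ : X → ℕ → ℕ), Continuous f ∧ Measurable σ ∧ (∀ z, f z ∈ B) ∧
      ∀ x ∈ B, f (σ x) = x := by
  classical
  have : PolishSpace B := hB.polishSpace
  have : Nonempty B := hne.to_subtype
  let _ := upgradeIsCompletelyMetrizable B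
  obtain ⟨f, σ, hf, hσ, h⟩ := aux_section_complete B
  refine ⟨fun z => f z, fun x => if hx : x ∈ B then σ ⟨x, hx⟩ else 0,
    continuous_subtype_val.comp hf, ?_, fun z => (f z).2, fun x hx => ?_⟩
  · exact Measurable.dite (s := B) (f := fun x => σ x) (g := fun _ => 0)
      hσ measurable_const hB.measurableSet
  · simp [hx, h]

theorem aux_section {X : Type*} [t : TopologicalSpace X] [PolishSpace X]
    [MeasurableSpace X] [BorelSpace X] {B : Set X} (hB : MeasurableSet B) (hne : B.Nonempty) :
    ∃ (f : (ℕ → ℕ) → X) (σ : X → ℕ → ℕ), Continuous f ∧ Measurable σ ∧ (∀ z, f z ∈ B) ∧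
      ∀ x ∈ B, f (σ x) = x := by
  obtain ⟨t', hle, hp, hc, -⟩ := hB.isClopenable
  have hb : @BorelSpace X t' _ := by
    refine @BorelSpace.mk X t' _ ?_
    rw [@BorelSpace.measurable_eq X t _ _, MeasureTheory.borel_eq_borel_of_le hp ‹_› hle]
  obtain ⟨f, σ, hf, h⟩ := @aux_section_closed X t' hp _ hb B hc hne
  exact ⟨f, σ, continuous_le_rng hle hf, h⟩

/-- The box below `N` in the Baire space. -/
def auxBox (N : ℕ → ℕ) : NonemptyCompacts (ℕ → ℕ) where
  carrier := Set.pi univ fun k => Set.Iic (N k)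
  isCompact' := isCompact_univ_pi fun _ => (Set.finite_Iic _).isCompact
  nonempty' := ⟨0, fun _ _ => Nat.zero_le _⟩

theorem mem_auxBox {N z : ℕ → ℕ} : z ∈ (auxBox N : Set (ℕ → ℕ)) ↔ ∀ k, z k ≤ N k := by
  change z ∈ Set.pi univ (fun k => Set.Iic (N k)) ↔ _
  simp [Pi.le_def]

theorem continuous_auxBox : Continuous auxBox := by
  rw [continuous_iff_continuousAt]
  intro N
  rw [ContinuousAt, Uniform.tendsto_nhds_right]
  rw [(Filter.basis_sets _).uniformity_nonemptyCompacts.tendsto_right_iff]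
  intro V hV
  rw [Pi.uniformity] at hV
  obtain ⟨I, hI, W, hW, rfl⟩ := Filter.mem_iInf.1 hV
  have hag : ∀ x y : ℕ → ℕ, (∀ k ∈ I, x k = y k) → (x, y) ∈ ⋂ i, W i := by
    intro x y h
    refine mem_iInter.2 fun i => ?_
    obtain ⟨S, hS, hSW⟩ := Filter.mem_comap.1 (hW i)
    refine hSW ?_
    change (x i, y i) ∈ S
    rw [h i i.2]
    exact refl_mem_uniformity hS
  have hev : ∀ᶠ N' in 𝓝 N, ∀ k ∈ I, N' k = N k := by
    rw [Filter.eventually_all_finite hI]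
    intro k _
    have := (continuous_apply (A := fun _ : ℕ => ℕ) k).tendsto N
    rw [nhds_discrete ℕ] at this
    exact Filter.tendsto_pure.1 this
  filter_upwards [hev] with N' hN'
  refine (mem_hausdorffEntourage _ _ _).2 ⟨fun z hz => ?_, fun z hz => ?_⟩
  · refine ⟨fun k => min (z k) (N' k), mem_auxBox.2 fun k => min_le_right _ _, ?_⟩
    refine hag _ _ fun k hk => ?_
    rw [hN' k hk, min_eq_left (mem_auxBox.1 hz k)]
  · refine ⟨fun k => min (z k) (N k), mem_auxBox.2 fun k => min_le_right _ _, ?_⟩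
    refine hag _ _ fun k hk => ?_
    rw [← hN' k hk, min_eq_left (mem_auxBox.1 hz k)]

theorem aux_bound {X Y : Type*} [MeasurableSpace X] [MeasurableSpace Y] (μy : Y → Measure X)
    (hmeas : ∀ B : Set X, MeasurableSet B → Measurable fun y => μy y B)
    {B : Set X} (hB : MeasurableSet B) (hfin : ∀ y, μy y B < ⊤)
    {σ : X → ℕ → ℕ} (hσ : Measurable σ) {ε : ENNReal} (hε : ε ≠ 0) :
    ∃ N : Y → ℕ → ℕ, Measurable N ∧ ∀ y, μy y {x ∈ B | ¬ ∀ k, σ x k ≤ N y k} ≤ ε := by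
  classical
  obtain ⟨δ, hδ, hsum⟩ := ENNReal.exists_pos_sum_of_countable' hε ℕ
  have hms : ∀ k n, MeasurableSet {x ∈ B | n < σ x k} := fun k n =>
    hB.inter (measurableSet_lt measurable_const ((measurable_pi_apply k).comp hσ))
  have hex : ∀ k y, ∃ n, μy y {x ∈ B | n < σ x k} < δ k := by
    intro k y
    have ht : Tendsto (fun n => μy y {x ∈ B | n < σ x k}) atTop
        (𝓝 (μy y (⋂ n, {x ∈ B | n < σ x k}))) := by
      refine tendsto_measure_iInter_atTop (fun n => (hms k n).nullMeasurableSet) ?_ ?_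
      · intro a b hab x hx
        exact ⟨hx.1, lt_of_le_of_lt hab hx.2⟩
      · exact ⟨0, ((measure_mono fun x hx => hx.1).trans_lt (hfin y)).ne⟩
    have h0 : (⋂ n, {x ∈ B | n < σ x k}) = ∅ := by
      refine eq_empty_iff_forall_notMem.2 fun x hx => ?_
      exact lt_irrefl _ (mem_iInter.1 hx (σ x k)).2
    rw [h0, measure_empty] at ht
    exact (ht.eventually (gt_mem_nhds (hδ k))).exists
  refine ⟨fun y k => Nat.find (hex k y), measurable_pi_iff.2 fun k => ?_, fun y => ?_⟩
  · exact measurable_find (hex k) fun n => measurableSet_lt (hmeas _ (hms k n)) measurable_const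
  · calc μy y {x ∈ B | ¬ ∀ k, σ x k ≤ Nat.find (hex k y)}
        ≤ μy y (⋃ k, {x ∈ B | Nat.find (hex k y) < σ x k}) := by
          refine measure_mono fun x hx => ?_
          obtain ⟨k, hk⟩ := not_forall.1 hx.2
          exact mem_iUnion.2 ⟨k, hx.1, not_le.1 hk⟩
      _ ≤ ∑' k, μy y {x ∈ B | Nat.find (hex k y) < σ x k} := measure_iUnion_le _
      _ ≤ ∑' k, δ k := ENNReal.tsum_le_tsum fun k => (Nat.find_spec (hex k y)).le
      _ ≤ ε := hsum.le

theorem aux_single {X Y : Type*} [MetricSpace X] [PolishSpace X] [Nonempty X]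
    [MeasurableSpace X] [BorelSpace X] [MeasurableSpace Y]
    [MeasurableSpace (NonemptyCompacts X)] [BorelSpace (NonemptyCompacts X)]
    (μy : Y → Measure X)
    (hmeas : ∀ B : Set X, MeasurableSet B → Measurable fun y => μy y B)
    (hsf : ∀ y : Y, SigmaFinite (μy y))
    {B : Set X} (hB : MeasurableSet B) (hfin : ∀ y, μy y B < ⊤) {ε : ENNReal} (hε : ε ≠ 0) :
    ∃ K : Y → NonemptyCompacts X, Measurable K ∧ (∀ y, μy y (K y : Set X) < ⊤) ∧
      ∀ y, μy y (B \ K y) ≤ ε := by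
  rcases B.eq_empty_or_nonempty with rfl | hne
  · refine ⟨fun _ => {Classical.arbitrary X}, measurable_const, fun y => ?_, fun y => by simp⟩
    have := hsf y
    simpa using measure_singleton_lt_top (μ := μy y) (a := Classical.arbitrary X)
  obtain ⟨f, σ, hf, hσ, hfB, hfσ⟩ := aux_section hB hne
  obtain ⟨N, hN, hle⟩ := aux_bound μy hmeas hB hfin hσ hε
  refine ⟨fun y => (auxBox (N y)).map f hf, ?_, fun y => ?_, fun y => ?_⟩
  · exact (hf.nonemptyCompacts_map.comp continuous_auxBox).measurable.comp hN
  · refine (measure_mono ?_).trans_lt (hfin y)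
    rw [NonemptyCompacts.coe_map]
    rintro _ ⟨z, -, rfl⟩
    exact hfB z
  · refine (measure_mono ?_).trans (hle y)
    rintro x ⟨hx, hxK⟩
    refine ⟨hx, fun h => hxK ?_⟩
    rw [NonemptyCompacts.coe_map]
    exact ⟨σ x, mem_auxBox.2 h, hfσ x hx⟩

end Aux

/-- If `{μy y}` is a uniformly σ-finite disintegration of `μ` with respect to `(ν, φ)`,
then there is a sequence of Borel maps `y ↦ K n y` into the hyperspace `K(X)` of
(nonempty) compact subsets of `X` such that `μy y (K n y) < ∞` for all `y, n`, and
`μy y ((⋃ n, K n y)ᶜ) = 0` for all `y`. -/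
theorem exists_compact_selections_of_uniformly_sigmaFinite
    {X Y : Type*} [MetricSpace X] [PolishSpace X] [Nonempty X]
    [MeasurableSpace X] [BorelSpace X]
    [MeasurableSpace Y] [StandardBorelSpace Y]
    [MeasurableSpace (NonemptyCompacts X)] [BorelSpace (NonemptyCompacts X)]
    (φ : X → Y) (hφ : Measurable φ)
    (μ : Measure X) (ν : Measure Y) (μy : Y → Measure X)
    (hmeas : ∀ B : Set X, MeasurableSet B → Measurable fun y => μy y B)
    (hconc : ∀ y : Y, μy y ((φ ⁻¹' {y})ᶜ) = 0)
    (hint : ∀ B : Set X, MeasurableSet B → μ B = ∫⁻ y, μy y B ∂ν)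
    (hsf : ∀ y : Y, SigmaFinite (μy y))
    (B : ℕ → Set X) (hB : ∀ n, MeasurableSet (B n))
    (hBfin : ∀ n, ∀ y : Y, μy y (B n) < ⊤)
    (hBcover : ∀ y : Y, μy y ((⋃ n, B n)ᶜ) = 0) :
    ∃ K : ℕ → Y → NonemptyCompacts X,
      (∀ n, Measurable (K n)) ∧
      (∀ n, ∀ y : Y, μy y (K n y : Set X) < ⊤) ∧
      (∀ y : Y, μy y ((⋃ n, (K n y : Set X))ᶜ) = 0) := by
  have key : ∀ p : ℕ × ℕ, _ := fun p =>
    aux_single μy hmeas hsf (hB p.1) (hBfin p.1) (ε := ((p.2 : ENNReal) + 1)⁻¹) (by simp)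
  choose K hKm hKf hK using key
  refine ⟨fun n => K n.unpair, fun n => hKm _, fun n => hKf _, fun y => ?_⟩
  have hsub : (⋃ n, (K (Nat.unpair n) y : Set X))ᶜ ⊆
      (⋃ n, B n)ᶜ ∪ ⋃ n, ⋂ m, B n \ K (n, m) y := by
    intro x hx
    by_cases hxB : x ∈ ⋃ n, B n
    · right
      obtain ⟨n, hn⟩ := Set.mem_iUnion.1 hxB
      refine Set.mem_iUnion.2 ⟨n, Set.mem_iInter.2 fun m => ⟨hn, fun h => hx ?_⟩⟩
      refine Set.mem_iUnion.2 ⟨Nat.pair n m, ?_⟩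
      rwa [Nat.unpair_pair]
    · exact Or.inl hxB
  refine measure_mono_null hsub (measure_union_null (hBcover y) (measure_iUnion_null fun n => ?_))
  have hlim : Filter.Tendsto (fun m : ℕ => ((m : ENNReal) + 1)⁻¹) Filter.atTop (nhds 0) := by
    have := (Filter.tendsto_add_atTop_iff_nat 1).2 ENNReal.tendsto_inv_nat_nhds_zero
    simpa using this
  refine le_antisymm (ge_of_tendsto' hlim fun m => ?_) zero_le
  exact (measure_mono (Set.iInter_subset _ m)).trans (hK (n, m) y)
end

section
/- Let {μ_y : y ∈ Y} be a σ-finite disintegration of μ with respect to (ν, φ) such that each μ_y is purely atomic. If the map (y, K) ↦ μ_y(K) from Y × K(X) to [0,∞] is Borel measurable, then {μ_y} is uniformly σ-finite. -/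
open MeasureTheory TopologicalSpace

namespace LNAux

/-- Covered by countably many measurable sets on which `φ` is injective. -/
def Small {P Y : Type*} [MeasurableSpace P] (φ : P → Y) (C : Set P) : Prop :=
  ∃ B : ℕ → Set P, (∀ n, MeasurableSet (B n)) ∧ (∀ n, Set.InjOn φ (B n)) ∧ C ⊆ ⋃ n, B n

theorem Small.mono {P Y : Type*} [MeasurableSpace P] {φ : P → Y} {C D : Set P}
    (h : Small φ D) (hCD : C ⊆ D) : Small φ C := by
  obtain ⟨B, h1, h2, h3⟩ := h
  exact ⟨B, h1, h2, hCD.trans h3⟩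

theorem Small.of_injOn {P Y : Type*} [MeasurableSpace P] {φ : P → Y} {C : Set P}
    (hC : MeasurableSet C) (h : Set.InjOn φ C) : Small φ C :=
  ⟨fun _ => C, fun _ => hC, fun _ => h, fun _ hx => Set.mem_iUnion.2 ⟨0, hx⟩⟩

theorem Small.iUnion {P Y : Type*} [MeasurableSpace P] {φ : P → Y} {κ : Type*} [Countable κ]
    {C : κ → Set P} (h : ∀ k, Small φ (C k)) : Small φ (⋃ k, C k) := by
  choose B h1 h2 h3 using h
  rcases isEmpty_or_nonempty κ with hκ | hκ
  · exact (Small.of_injOn (φ := φ) MeasurableSet.empty (by simp)).mono (by simp)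
  · obtain ⟨e, he⟩ := exists_surjective_nat (κ × ℕ)
    refine ⟨fun n => B (e n).1 (e n).2, fun n => h1 _ _, fun n => h2 _ _, ?_⟩
    intro x hx
    obtain ⟨k, hk⟩ := Set.mem_iUnion.1 hx
    obtain ⟨m, hm⟩ := Set.mem_iUnion.1 (h3 k hk)
    obtain ⟨n, hn⟩ := he (k, m)
    refine Set.mem_iUnion.2 ⟨n, ?_⟩
    simpa [hn] using hm

theorem Small.union {P Y : Type*} [MeasurableSpace P] {φ : P → Y}
    {C D : Set P} (hC : Small φ C) (hD : Small φ D) : Small φ (C ∪ D) := by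
  rw [Set.union_eq_iUnion]
  exact Small.iUnion (fun b => by cases b <;> simpa)

/-- A family of sets is good if the base splits measurably into parts over which some member
is small. -/
def Good {P Y ι : Type*} [MeasurableSpace P] [MeasurableSpace Y] (φ : P → Y)
    (C : ι → Set P) : Prop :=
  ∃ S : ι → Set Y, (∀ i, MeasurableSet (S i)) ∧ (⋂ i, φ '' C i) ⊆ (⋃ i, S i) ∧
    ∀ i, Small φ (φ ⁻¹' S i ∩ C i)

theorem exists_pairs (P : Type*) [MetricSpace P] [SeparableSpace P] (ε : ℝ) (hε : 0 < ε) :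
    ∃ (s : Set (P × P × ℕ)) (B : s → Bool → Set P), s.Countable ∧
      (∀ q b, IsClosed (B q b)) ∧ (∀ q b, ∀ x ∈ B q b, ∀ x' ∈ B q b, dist x x' ≤ ε) ∧
      (∀ q, Disjoint (B q false) (B q true)) ∧
      (∀ x x', x ≠ x' → ∃ q, x ∈ B q false ∧ x' ∈ B q true) := by
  obtain ⟨t, htc, htd⟩ := exists_countable_dense P
  let r : ℕ → ℝ := fun n => 1 / ((n : ℝ) + 1)
  let s : Set (P × P × ℕ) := {p | p.1 ∈ t ∧ p.2.1 ∈ t ∧ 2 * r p.2.2 ≤ ε ∧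
    Disjoint (Metric.closedBall p.1 (r p.2.2)) (Metric.closedBall p.2.1 (r p.2.2))}
  refine ⟨s, fun q b => Metric.closedBall (if b then q.1.2.1 else q.1.1) (r q.1.2.2),
    ?_, ?_, ?_, ?_, ?_⟩
  · refine (htc.prod (htc.prod (Set.countable_univ (α := ℕ)))).mono ?_
    rintro ⟨a, b, k⟩ ⟨h1, h2, -⟩
    exact ⟨h1, h2, trivial⟩
  · intro q b
    exact Metric.isClosed_closedBall
  · intro q b x hx x' hx'
    have := q.2.2.2.1
    have h1 := dist_triangle_right x x' (if b then q.1.2.1 else q.1.1)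
    rw [Metric.mem_closedBall] at hx hx'
    linarith
  · intro q
    simpa using q.2.2.2.2
  · intro x x' hne
    have hd : 0 < dist x x' := dist_pos.2 hne
    obtain ⟨k, hk⟩ := exists_nat_one_div_lt (show 0 < min (ε / 2) (dist x x' / 4) by positivity)
    have hk1 : r k < ε / 2 := hk.trans_le (min_le_left _ _)
    have hk2 : r k < dist x x' / 4 := hk.trans_le (min_le_right _ _)
    have hr : 0 < r k := by positivity
    obtain ⟨a, ha, hxa⟩ := htd.exists_dist_lt x hr
    obtain ⟨b, hb, hxb⟩ := htd.exists_dist_lt x' hr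
    refine ⟨⟨(a, b, k), ha, hb, by simp only; linarith, ?_⟩, ?_, ?_⟩
    · apply Metric.closedBall_disjoint_closedBall
      simp only
      have h1 := dist_triangle4 x a b x'
      rw [dist_comm b x'] at h1
      linarith
    · simpa using hxa.le
    · simpa using hxb.le

theorem measurable_subsingleton {P Y : Type*} [MetricSpace P] [SeparableSpace P]
    [MeasurableSpace P] [BorelSpace P] [MeasurableSpace Y] (φ : P → Y)
    (himg : ∀ B : Set P, MeasurableSet B → MeasurableSet (φ '' B))
    (B : Set P) (hB : MeasurableSet B) :
    MeasurableSet {y | ∀ x ∈ B, ∀ x' ∈ B, φ x = y → φ x' = y → x = x'} := by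
  obtain ⟨s, D, hs, hcl, -, hdis, hsep⟩ := exists_pairs P 1 one_pos
  have := hs.to_subtype
  have : {y | ∀ x ∈ B, ∀ x' ∈ B, φ x = y → φ x' = y → x = x'} =
      (⋃ q, (φ '' (B ∩ D q false)) ∩ (φ '' (B ∩ D q true)))ᶜ := by
    ext y
    constructor
    · intro h hy
      obtain ⟨q, ⟨x, ⟨hx, hxD⟩, rfl⟩, ⟨x', ⟨hx', hxD'⟩, he⟩⟩ := Set.mem_iUnion.1 hy
      have := h x hx x' hx' rfl he
      subst this
      exact Set.disjoint_left.1 (hdis q) hxD hxD'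
    · intro h x hx x' hx' h1 h2
      by_contra hne
      obtain ⟨q, h3, h4⟩ := hsep x x' hne
      exact h (Set.mem_iUnion.2 ⟨q, ⟨x, ⟨hx, h3⟩, h1⟩, ⟨x', ⟨hx', h4⟩, h2⟩⟩)
  rw [this]
  exact (MeasurableSet.iUnion fun q => (himg _ (hB.inter (hcl _ _).measurableSet)).inter
    (himg _ (hB.inter (hcl _ _).measurableSet))).compl

theorem step {P Y ι : Type*} [Finite ι] [MetricSpace P] [SeparableSpace P]
    [MeasurableSpace P] [BorelSpace P] [MeasurableSpace Y] (φ : P → Y) (hφ : Measurable φ)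
    (himg : ∀ B : Set P, MeasurableSet B → MeasurableSet (φ '' B))
    (C : ι → Set P) (hC : ∀ i, IsClosed (C i)) (hbad : ¬ Good φ C) (ε : ℝ) (hε : 0 < ε) :
    ∃ D : ι × Bool → Set P, (∀ q, IsClosed (D q)) ∧ (∀ q, D q ⊆ C q.1) ∧
      (∀ q, ∀ x ∈ D q, ∀ x' ∈ D q, dist x x' ≤ ε) ∧
      (∀ i, Disjoint (D (i, false)) (D (i, true))) ∧ ¬ Good φ D := by
  obtain ⟨s, B, hs, hcl, hdiam, hdis, hsep⟩ := exists_pairs P ε hε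
  have := hs.to_subtype
  by_contra hcon
  have hgood : ∀ k : ι → s, Good φ (fun q : ι × Bool => C q.1 ∩ B (k q.1) q.2) := by
    intro k
    by_contra hk
    refine hcon ⟨_, fun q => (hC _).inter (hcl _ _), fun q => Set.inter_subset_left,
      fun q x hx x' hx' => hdiam _ _ x hx.2 x' hx'.2, fun i => ?_, hk⟩
    exact (hdis (k i)).mono Set.inter_subset_right Set.inter_subset_right
  choose S hSm hScov hSsmall using hgood
  let R : ι → Set P := fun i =>
    ⋃ p : (ι → s) × Bool, φ ⁻¹' (S p.1 (i, p.2)) ∩ (C i ∩ B (p.1 i) p.2)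
  have hRm : ∀ i, MeasurableSet (R i) := fun i => MeasurableSet.iUnion fun p =>
    (hφ (hSm _ _)).inter ((hC _).inter (hcl _ _)).measurableSet
  have hRs : ∀ i, Small φ (R i) := fun i => Small.iUnion fun p => hSsmall p.1 (i, p.2)
  have hDm : ∀ i, MeasurableSet (C i \ R i) := fun i => (hC i).measurableSet.diff (hRm i)
  have hTm := fun i => measurable_subsingleton φ himg _ (hDm i)
  apply hbad
  refine ⟨_, hTm, ?_, ?_⟩
  · intro y hy
    by_contra hny
    simp only [Set.mem_iUnion, Set.mem_ofPred_eq, not_exists, not_forall] at hny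
    choose x hx x' hx' h1 h2 hne using hny
    choose k hk1 hk2 using fun i => hsep (x i) (x' i) (hne i)
    have hyk : y ∈ ⋂ q : ι × Bool, φ '' (C q.1 ∩ B (k q.1) q.2) := by
      refine Set.mem_iInter.2 ?_
      rintro ⟨i, b⟩
      cases b
      · exact ⟨x i, ⟨(hx i).1, hk1 i⟩, h1 i⟩
      · exact ⟨x' i, ⟨(hx' i).1, hk2 i⟩, h2 i⟩
    obtain ⟨⟨i, b⟩, hi⟩ := Set.mem_iUnion.1 (hScov k hyk)
    cases b
    · refine (hx i).2 (Set.mem_iUnion.2 ⟨(k, false), ?_, (hx i).1, hk1 i⟩)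
      simpa [h1 i] using hi
    · refine (hx' i).2 (Set.mem_iUnion.2 ⟨(k, true), ?_, (hx' i).1, hk2 i⟩)
      simpa [h2 i] using hi
  · intro i
    refine ((hRs i).union (Small.of_injOn ((hφ (hTm i)).inter (hDm i)) ?_)).mono ?_
    · rintro x ⟨hx, hxD⟩ x' ⟨-, hxD'⟩ he
      exact hx x hxD x' hxD' rfl he.symm
    · rintro x ⟨hx, hxC⟩
      by_cases hxR : x ∈ R i
      · exact Or.inl hxR
      · exact Or.inr ⟨hx, hxC, hxR⟩

theorem Good.reindex {P Y ι κ : Type*} [MeasurableSpace P] [MeasurableSpace Y] {φ : P → Y}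
    {C : ι → Set P} (e : ι ≃ κ) (h : Good φ (fun k => C (e.symm k))) : Good φ C := by
  obtain ⟨S, h1, h2, h3⟩ := h
  refine ⟨fun i => S (e i), fun i => h1 _, ?_, fun i => by simpa using h3 (e i)⟩
  intro y hy
  obtain ⟨k, hk⟩ := Set.mem_iUnion.1 (h2 (Set.mem_iInter.2 fun k => Set.mem_iInter.1 hy _))
  exact Set.mem_iUnion.2 ⟨e.symm k, by simpa using hk⟩

theorem step_fin {P Y : Type*} [MetricSpace P] [SeparableSpace P]
    [MeasurableSpace P] [BorelSpace P] [MeasurableSpace Y] (φ : P → Y) (hφ : Measurable φ)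
    (himg : ∀ B : Set P, MeasurableSet B → MeasurableSet (φ '' B)) (n : ℕ)
    (C : (Fin n → Bool) → Set P) (hC : ∀ i, IsClosed (C i)) (hbad : ¬ Good φ C)
    (ε : ℝ) (hε : 0 < ε) :
    ∃ D : (Fin (n + 1) → Bool) → Set P, ((∀ q, IsClosed (D q)) ∧ ¬ Good φ D) ∧
      (∀ q, D q ⊆ C (Fin.init q)) ∧
      (∀ q, ∀ x ∈ D q, ∀ x' ∈ D q, dist x x' ≤ ε) ∧
      (∀ q q' : Fin (n + 1) → Bool, Fin.init q = Fin.init q' → q (Fin.last n) ≠ q' (Fin.last n) →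
        Disjoint (D q) (D q')) := by
  obtain ⟨D, h1, h2, h3, h4, h5⟩ := step φ hφ himg C hC hbad ε hε
  let e : ((Fin n → Bool) × Bool) ≃ (Fin (n + 1) → Bool) :=
    { toFun := fun p => Fin.snoc (α := fun _ => Bool) p.1 p.2
      invFun := fun q => (Fin.init q, q (Fin.last n))
      left_inv := fun p => by simp
      right_inv := fun q => by simp }
  refine ⟨fun q => D (e.symm q), ⟨fun q => h1 _, fun h => h5 (h.reindex e)⟩, fun q => h2 _,
    fun q => h3 _, ?_⟩
  intro q q' hi hl
  change Disjoint (D (Fin.init q, q (Fin.last n))) (D (Fin.init q', q' (Fin.last n)))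
  rw [← hi]
  have := h4 (Fin.init q)
  cases h : q (Fin.last n) <;> cases h' : q' (Fin.last n)
  · simp [h, h'] at hl
  · exact this
  · exact this.symm
  · simp [h, h'] at hl

theorem small_univ {P Y : Type*} [MetricSpace P] [CompleteSpace P] [SeparableSpace P]
    [MeasurableSpace P] [BorelSpace P] [TopologicalSpace Y] [T2Space Y]
    [MeasurableSpace Y] [BorelSpace Y] (φ : P → Y) (hφ : Continuous φ)
    (himg : ∀ B : Set P, MeasurableSet B → MeasurableSet (φ '' B))
    (hcount : ∀ y, (φ ⁻¹' {y}).Countable) : Small φ Set.univ := by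
  by_contra hns
  have hbad0 : ¬ Good φ (fun _ : Fin 0 → Bool => (Set.univ : Set P)) := by
    rintro ⟨S, -, h2, h3⟩
    refine hns ((h3 default).mono ?_)
    intro x _
    obtain ⟨i, hi⟩ := Set.mem_iUnion.1 (h2 (Set.mem_iInter.2 fun _ => ⟨x, trivial, rfl⟩))
    rw [Subsingleton.elim i default] at hi
    exact ⟨hi, trivial⟩
  let T : ℕ → Type _ := fun n =>
    {C : (Fin n → Bool) → Set P // (∀ i, IsClosed (C i)) ∧ ¬ Good φ C}
  have hstep := fun (n : ℕ) (C : T n) =>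
    step_fin φ hφ.measurable himg n C.1 C.2.1 C.2.2 ((1 / 2 : ℝ) ^ n) (by positivity)
  choose next hn1 hn2 hn3 hn4 using hstep
  let F : (n : ℕ) → T n := fun n => Nat.rec (motive := T)
    ⟨fun _ => Set.univ, fun _ => isClosed_univ, hbad0⟩ (fun n C => ⟨next n C, hn1 n C⟩) n
  have hF : ∀ n, (F (n + 1)).1 = next n (F n) := fun n => rfl
  -- common values and points
  have hne : ∀ n, ∃ y, ∀ i, ∃ x ∈ (F n).1 i, φ x = y := by
    intro n
    by_contra hcon
    refine (F n).2.2 ⟨fun _ => ∅, fun _ => MeasurableSet.empty, ?_, fun i => ?_⟩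
    · intro y hy
      exact (hcon ⟨y, fun i => Set.mem_iInter.1 hy i⟩).elim
    · exact (Small.of_injOn (φ := φ) MeasurableSet.empty (by simp)).mono (by simp)
  choose y x hx hxy using hne
  let K : (ℕ → Bool) → ℕ → Set P := fun z n => (F n).1 (fun i => z i)
  let u : (ℕ → Bool) → ℕ → P := fun z n => x n (fun i => z i)
  have hKs : ∀ z n, K z (n + 1) ⊆ K z n := fun z n => hn2 n (F n) _
  have hKa : ∀ z, Antitone (K z) := fun z => antitone_nat_of_succ_le (hKs z)
  have huK : ∀ z n, u z n ∈ K z n := fun z n => hx n _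
  have hKd : ∀ z n, ∀ a ∈ K z (n + 1), ∀ b ∈ K z (n + 1), dist a b ≤ (1 / 2 : ℝ) ^ n :=
    fun z n => hn3 n (F n) _
  have hcau : ∀ z, CauchySeq (fun n => u z (n + 1)) := by
    intro z
    refine cauchySeq_of_le_geometric (1 / 2) 1 (by norm_num) ?_
    intro n
    rw [one_mul]
    exact hKd z n _ (huK z _) _ (hKs z _ (huK z _))
  choose w hw using fun z => cauchySeq_tendsto_of_complete (hcau z)
  have hwK : ∀ z n, w z ∈ K z n := by
    intro z n
    refine ((F n).2.1 _).mem_of_tendsto (hw z) ?_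
    filter_upwards [Filter.eventually_ge_atTop n] with m hm
    exact hKa z (by omega : n ≤ m + 1) (huK z _)
  have hφw : ∀ z z', φ (w z) = φ (w z') := by
    intro z z'
    have key : ∀ z, Filter.Tendsto (fun n => y (n + 1)) Filter.atTop (nhds (φ (w z))) := by
      intro z
      refine ((hφ.tendsto _).comp (hw z)).congr ?_
      intro n
      exact hxy _ _
    exact tendsto_nhds_unique (key z) (key z')
  have hinj : Function.Injective w := by
    intro z z' h
    by_contra hzz
    have hex : ∃ n, z n ≠ z' n := by
      by_contra hc
      push Not at hc
      exact hzz (funext hc)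
    classical
    have h1 := Nat.find_spec hex
    have h2 := fun m (hm : m < Nat.find hex) => not_not.1 (Nat.find_min hex hm)
    generalize Nat.find hex = n at h1 h2
    have := hn4 n (F n) (fun i => z i) (fun i => z' i)
      (by funext i; simpa [Fin.init] using h2 i i.2) (by simpa using h1)
    refine Set.disjoint_left.1 this (hwK z (n + 1)) ?_
    rw [h]
    exact hwK z' (n + 1)
  have hc : (Set.univ : Set (ℕ → Bool)).Countable := by
    have h0 := (hcount (φ (w fun _ => false))).preimage_of_injOn (f := w) hinj.injOn
    refine h0.mono ?_
    intro z _
    exact hφw _ _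
  have := Set.countable_univ_iff.1 hc
  obtain ⟨e, he⟩ := exists_surjective_nat (ℕ → Bool)
  obtain ⟨n, hn⟩ := he (fun m => !(e m m))
  have hnn := congrFun hn n
  simp at hnn

theorem small_univ' {P Y : Type*} [MeasurableSpace P] [StandardBorelSpace P]
    [MeasurableSpace Y] [StandardBorelSpace Y] (φ : P → Y) (hφ : Measurable φ)
    (himg : ∀ B : Set P, MeasurableSet B → MeasurableSet (φ '' B))
    (hcount : ∀ y, (φ ⁻¹' {y}).Countable) : Small φ Set.univ := by
  let := upgradeStandardBorel Y
  let hX := upgradeStandardBorel P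
  obtain ⟨t', hle, hc, hp⟩ := hφ.exists_continuous
  have hb : @BorelSpace P t' _ := by
    constructor
    rw [borel_eq_borel_of_le hp hX.toPolishSpace hle]
    exact BorelSpace.measurable_eq
  clear hle
  let := t'
  let := upgradeIsCompletelyMetrizable P
  exact small_univ φ hc himg hcount

end LNAux



/-- If `{μy y}` is a σ-finite disintegration of `μ` with respect to `(ν, φ)` into purely
atomic measures, and the map `(y, K) ↦ μy y K` on `Y × K(X)` is Borel measurable, then
`{μy y}` is uniformly σ-finite. -/
theorem uniformly_sigmaFinite_of_measurable_purely_atomic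
    {X Y : Type*} [MetricSpace X] [PolishSpace X]
    [MeasurableSpace X] [BorelSpace X]
    [MeasurableSpace Y] [StandardBorelSpace Y]
    [MeasurableSpace (NonemptyCompacts X)] [BorelSpace (NonemptyCompacts X)]
    (φ : X → Y) (hφ : Measurable φ)
    (μ : Measure X) (ν : Measure Y) (μy : Y → Measure X)
    (hmeas : ∀ B : Set X, MeasurableSet B → Measurable fun y => μy y B)
    (hconc : ∀ y : Y, μy y ((φ ⁻¹' {y})ᶜ) = 0)
    (hint : ∀ B : Set X, MeasurableSet B → μ B = ∫⁻ y, μy y B ∂ν)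
    (hsf : ∀ y : Y, SigmaFinite (μy y))
    (hatomset : ∀ y : Y, ({x : X | 0 < μy y {x}}).Countable)
    (hatomic : ∀ y : Y, μy y ({x : X | 0 < μy y {x}}ᶜ) = 0)
    (hjoint : Measurable fun p : Y × NonemptyCompacts X => μy p.1 (p.2 : Set X)) :
    ∃ B : ℕ → Set X, (∀ n, MeasurableSet (B n)) ∧
      (∀ n, ∀ y : Y, μy y (B n) < ⊤) ∧
      (∀ y : Y, μy y ((⋃ n, B n)ᶜ) = 0) := by
  classical
  let f : X → ENNReal := fun x => μy (φ x) {x}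
  have hf : Measurable f := by
    have h1 : Measurable fun x : X => (φ x, ({x} : NonemptyCompacts X)) :=
      hφ.prodMk NonemptyCompacts.continuous_singleton.measurable
    exact hjoint.comp h1
  let A : Set X := {x | 0 < f x}
  have hA : MeasurableSet A := measurableSet_lt measurable_const hf
  have hatom : ∀ y x, 0 < μy y {x} → φ x = y := by
    intro y x hx
    by_contra hne
    refine hx.ne' (measure_mono_null ?_ (hconc y))
    rintro _ rfl
    exact hne
  have := hA.standardBorel
  let ψ : A → Y := fun a => φ a
  have hψ : Measurable ψ := hφ.comp measurable_subtype_coe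
  have hsmall : LNAux.Small ψ Set.univ := by
    refine LNAux.small_univ' ψ hψ ?_ ?_
    · intro B hB
      have hB' : MeasurableSet (Subtype.val '' B) := hA.subtype_image hB
      have : ψ '' B = {y | 0 < μy y (Subtype.val '' B)} := by
        ext y
        constructor
        · rintro ⟨a, ha, rfl⟩
          refine lt_of_lt_of_le a.2 (measure_mono ?_)
          rintro _ rfl
          exact ⟨a, ha, rfl⟩
        · intro hy
          by_contra hne
          refine (ne_of_gt hy) (measure_mono_null ?_ (hconc y))
          rintro _ ⟨a, ha, rfl⟩ h
          exact hne ⟨a, ha, h⟩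
      rw [this]
      exact measurableSet_lt measurable_const (hmeas _ hB')
    · intro y
      refine ((hatomset y).preimage (f := (Subtype.val : A → X))
        Subtype.val_injective).mono ?_
      intro a ha
      have h1 : φ a = y := ha
      have h2 : 0 < μy (φ a) {(a : X)} := a.2
      rw [h1] at h2
      exact h2
  obtain ⟨B, hBm, hBi, hBc⟩ := hsmall
  refine ⟨fun n => Subtype.val '' B n, fun n => hA.subtype_image (hBm n), ?_, ?_⟩
  · intro n y
    have h0 : μy y (Subtype.val '' B n) ≤ μy y ((Subtype.val '' B n) ∩ φ ⁻¹' {y}) := by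
      rw [← add_zero (μy y ((Subtype.val '' B n) ∩ φ ⁻¹' {y})), ← hconc y]
      refine (measure_mono ?_).trans (measure_union_le _ _)
      intro x hx
      by_cases h : x ∈ φ ⁻¹' {y}
      · exact Or.inl ⟨hx, h⟩
      · exact Or.inr h
    refine h0.trans_lt ?_
    have hsub : ((Subtype.val '' B n) ∩ φ ⁻¹' {y}).Subsingleton := by
      rintro _ ⟨⟨a, ha, rfl⟩, h⟩ _ ⟨⟨b, hb, rfl⟩, h'⟩
      have : ψ a = ψ b := (show φ a = y from h).trans (show φ b = y from h').symm
      rw [hBi n ha hb this]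
    rcases hsub.eq_empty_or_singleton with h | ⟨x, h⟩
    · rw [h]; simp
    · rw [h]
      have := hsf y
      refine lt_of_le_of_lt (measure_mono ?_)
        (measure_spanningSets_lt_top (μy y) (spanningSetsIndex (μy y) x))
      rintro _ rfl
      exact mem_spanningSetsIndex _ _
  · intro y
    refine measure_mono_null ?_ (measure_union_null (hatomic y) (hconc y))
    intro x hx
    by_contra hcon
    simp only [Set.mem_union, not_or, Set.mem_compl_iff, not_not] at hcon
    obtain ⟨h1, h2⟩ := hcon
    have h3 : φ x = y := h2
    have h4 : x ∈ A := by
      change 0 < μy (φ x) {x}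
      rw [h3]
      exact h1
    obtain ⟨n, hn⟩ := Set.mem_iUnion.1 (hBc (Set.mem_univ (⟨x, h4⟩ : A)))
    exact hx (Set.mem_iUnion.2 ⟨n, ⟨x, h4⟩, hn, rfl⟩)
end
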